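/- Let N ≥ 1, let λ₁, …, λ_N ∈ ℝ² be unit vectors, let G ∈ ℝ^{N×2N} be the block-diagonal matrix whose i-th diagonal block is the row vector λ̄ᵢᵀ, and suppose the cumulative bearing matrix P = Σ_{i=1}^N (2I₂ − 2λᵢλᵢᵀ) is positive definite. Let (k_{ij}) for i,j ∈ {1,…,N,*} be a symmetric positive semidefinite (N+1)×(N+1) real matrix with k_{ii} > 0 for all i and k_{**} > 0; let K ∈ ℝ^{2N×2N} have (i,j) block k_{ij}I₂, let K* ∈ ℝ^{2N×2} have i-th block k_{i*}I₂, and let σ > 0. Then the posterior covariance Σ = k_{**}I₂ − K*ᵀGᵀ(G(K + σ²I_{2N})Gᵀ)⁻¹GK* satisfies ‖Σ‖ ≤ 2k_{**}σ²/(N·k̄) + ξ/k̄, where k̄ = max_{1≤i≤N} k_{ii}, ξ = k_{**}·k̄ − (min_{1≤i≤N} k_{i*}²)/cond(P), and cond(P) = λ_max(P)/λ_min(P) is the condition number of P. -/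

import Mathlib

open Matrix

/-- The rotation-and-scaling matrix `R` with first row `(0, √2)` and second row `(−√2, 0)`. -/
noncomputable def Rmat : Matrix (Fin 2) (Fin 2) ℝ :=
  !![0, Real.sqrt 2; -Real.sqrt 2, 0]

/-- `λ̄ = R λ`. -/
noncomputable def bearingBar (l : Fin 2 → ℝ) : Fin 2 → ℝ := Rmat.mulVec l

/-- The block-diagonal bearing data matrix `G ∈ ℝ^{N×2N}` whose `i`-th diagonal block is the
row vector `λ̄ᵢᵀ`.  Columns are indexed by `Fin N × Fin 2`. -/
noncomputable def Gmat {N : ℕ} (lam : Fin N → Fin 2 → ℝ) :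
    Matrix (Fin N) (Fin N × Fin 2) ℝ :=
  fun i jl => if i = jl.1 then bearingBar (lam jl.1) jl.2 else 0

/-- The cumulative bearing matrix `P = Σᵢ (2I₂ − 2λᵢλᵢᵀ)`. -/
def cumBearing {N : ℕ} (lam : Fin N → Fin 2 → ℝ) : Matrix (Fin 2) (Fin 2) ℝ :=
  ∑ i : Fin N, ((2 : ℝ) • (1 : Matrix (Fin 2) (Fin 2) ℝ)
    - (2 : ℝ) • vecMulVec (lam i) (lam i))

/-- The `2N × 2N` kernel Gram matrix whose `(i,j)` block is `k_{ij} I₂`. -/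
def Kmat {N : ℕ} (k : Matrix (Option (Fin N)) (Option (Fin N)) ℝ) :
    Matrix (Fin N × Fin 2) (Fin N × Fin 2) ℝ :=
  fun il jm => k (some il.1) (some jm.1) * (1 : Matrix (Fin 2) (Fin 2) ℝ) il.2 jm.2

/-- The `2N × 2` kernel matrix `K*` whose `i`-th block is `k_{i*} I₂`. -/
def KstarMat {N : ℕ} (k : Matrix (Option (Fin N)) (Option (Fin N)) ℝ) :
    Matrix (Fin N × Fin 2) (Fin 2) ℝ :=
  fun il m => k (some il.1) none * (1 : Matrix (Fin 2) (Fin 2) ℝ) il.2 m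

/-- The spectral norm of a real square matrix, i.e. the operator norm of the induced
continuous linear endomorphism of Euclidean space. -/
noncomputable def specNorm {n : Type*} [Fintype n] [DecidableEq n]
    (A : Matrix n n ℝ) : ℝ :=
  ‖Matrix.toEuclideanCLM (𝕜 := ℝ) (n := n) A‖

/-- The condition number `λ_max / λ_min` of a Hermitian (real symmetric) matrix. -/
noncomputable def condNum {n : Type*} [Fintype n] [DecidableEq n] [Nonempty n]
    {A : Matrix n n ℝ} (hA : A.IsHermitian) : ℝ :=
  (⨆ i, hA.eigenvalues i) / (⨅ i, hA.eigenvalues i)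


lemma quad_sub_posSemidef {n : Type*} [Fintype n] [DecidableEq n] {A : Matrix n n ℝ}
    (hA : A.IsHermitian) (L : ℝ) (hL : ∀ i, hA.eigenvalues i ≤ L) :
    (L • (1 : Matrix n n ℝ) - A).PosSemidef := by
  have hd : (Matrix.diagonal (fun i => L - hA.eigenvalues i)).PosSemidef :=
    PosSemidef.diagonal (fun i => sub_nonneg.2 (hL i))
  have h := hd.mul_mul_conjTranspose_same (hA.eigenvectorUnitary : Matrix n n ℝ)
  have e : L • (1 : Matrix n n ℝ) - A = (hA.eigenvectorUnitary : Matrix n n ℝ) *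
      Matrix.diagonal (fun i => L - hA.eigenvalues i) *
      (hA.eigenvectorUnitary : Matrix n n ℝ)ᴴ := by
    have hu : (hA.eigenvectorUnitary : Matrix n n ℝ) *
      (hA.eigenvectorUnitary : Matrix n n ℝ)ᴴ = 1 := by
      rw [← star_eq_conjTranspose]; exact Unitary.coe_mul_star_self _
    have hs := hA.spectral_theorem
    rw [Unitary.conjStarAlgAut_apply] at hs
    have hdd : Matrix.diagonal (fun i => L - hA.eigenvalues i)
        = L • (1 : Matrix n n ℝ) - Matrix.diagonal hA.eigenvalues := by
      ext i j; by_cases hij : i = j <;> simp [Matrix.diagonal, hij]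
    rw [hdd, Matrix.mul_sub, Matrix.sub_mul, Matrix.mul_smul, Matrix.mul_one, Matrix.smul_mul, hu]
    congr 1
  rw [e]; exact h

lemma sub_quad_posSemidef {n : Type*} [Fintype n] [DecidableEq n] {A : Matrix n n ℝ}
    (hA : A.IsHermitian) (L : ℝ) (hL : ∀ i, L ≤ hA.eigenvalues i) :
    (A - L • (1 : Matrix n n ℝ)).PosSemidef := by
  have hd : (Matrix.diagonal (fun i => hA.eigenvalues i - L)).PosSemidef :=
    PosSemidef.diagonal (fun i => sub_nonneg.2 (hL i))
  have h := hd.mul_mul_conjTranspose_same (hA.eigenvectorUnitary : Matrix n n ℝ)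
  have e : A - L • (1 : Matrix n n ℝ) = (hA.eigenvectorUnitary : Matrix n n ℝ) *
      Matrix.diagonal (fun i => hA.eigenvalues i - L) *
      (hA.eigenvectorUnitary : Matrix n n ℝ)ᴴ := by
    have hu : (hA.eigenvectorUnitary : Matrix n n ℝ) *
      (hA.eigenvectorUnitary : Matrix n n ℝ)ᴴ = 1 := by
      rw [← star_eq_conjTranspose]; exact Unitary.coe_mul_star_self _
    have hs := hA.spectral_theorem
    rw [Unitary.conjStarAlgAut_apply] at hs
    have hdd : Matrix.diagonal (fun i => hA.eigenvalues i - L)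
        = Matrix.diagonal hA.eigenvalues - L • (1 : Matrix n n ℝ) := by
      ext i j; by_cases hij : i = j <;> simp [Matrix.diagonal, hij]
    rw [hdd, Matrix.mul_sub, Matrix.sub_mul, Matrix.mul_smul, Matrix.mul_one, Matrix.smul_mul, hu]
    congr 1
  rw [e]; exact h

lemma specNorm_le_of_quad {n : Type*} [Fintype n] [DecidableEq n] [Nonempty n] {A : Matrix n n ℝ}
    (hA : A.PosSemidef) (r : ℝ)
    (h : ∀ v : n → ℝ, v ⬝ᵥ (A *ᵥ v) ≤ r * (v ⬝ᵥ v)) : specNorm A ≤ r := by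
  unfold specNorm
  have hsym : (Matrix.toEuclideanCLM (𝕜 := ℝ) (n := n) A : EuclideanSpace ℝ n →ₗ[ℝ] EuclideanSpace ℝ n).IsSymmetric := by
    have := Matrix.isSymmetric_toEuclideanLin_iff.2 hA.1
    exact this
  have hq : ∀ x : EuclideanSpace ℝ n,
      (Matrix.toEuclideanCLM (𝕜 := ℝ) (n := n) A).reApplyInnerSelf x
        = x.ofLp ⬝ᵥ (A *ᵥ x.ofLp) := by
    intro x
    simp [ContinuousLinearMap.reApplyInnerSelf, EuclideanSpace.inner_eq_star_dotProduct]
  have hn : ∀ x : EuclideanSpace ℝ n, ‖x‖ ^ 2 = x.ofLp ⬝ᵥ x.ofLp := by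
    intro x
    rw [EuclideanSpace.real_norm_sq_eq]
    simp [dotProduct, sq]
  have hr : 0 ≤ r := by
    have h1 := h (fun _ => 1)
    have h2 := hA.dotProduct_mulVec_nonneg (fun _ => 1)
    have h3 : (0:ℝ) < (fun _ : n => (1:ℝ)) ⬝ᵥ (fun _ => 1) := by
      simp [dotProduct, Fintype.card_pos]
    simp only [star_trivial] at h2
    by_contra hc
    nlinarith
  rw [ContinuousLinearMap.norm_eq_iSup_rayleighQuotient _ hsym]
  apply ciSup_le
  intro x
  unfold ContinuousLinearMap.rayleighQuotient
  have h2 := hA.dotProduct_mulVec_nonneg x.ofLp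
  simp only [star_trivial] at h2
  rw [hq, abs_of_nonneg (by positivity)]
  apply div_le_of_le_mul₀ (by positivity) hr
  rw [hn]; exact h _

lemma dot_symm {n : Type*} [Fintype n] {M : Matrix n n ℝ} (hM : M.IsHermitian) (a b : n → ℝ) :
    a ⬝ᵥ (M *ᵥ b) = b ⬝ᵥ (M *ᵥ a) := by
  have hMt : Mᵀ = M := hM
  rw [dotProduct_mulVec, ← mulVec_transpose, hMt, dotProduct_comm]

lemma inv_quad_lower {n : Type*} [Fintype n] [DecidableEq n] {M : Matrix n n ℝ}
    (hM : M.PosDef) (C : ℝ) (hC : 0 < C)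
    (h : ∀ v : n → ℝ, v ⬝ᵥ (M *ᵥ v) ≤ C * (v ⬝ᵥ v)) (y : n → ℝ) :
    (y ⬝ᵥ y) / C ≤ y ⬝ᵥ (M⁻¹ *ᵥ y) := by
  have hu : IsUnit M.det := (Matrix.isUnit_iff_isUnit_det M).1 hM.isUnit
  set z := M⁻¹ *ᵥ y with hz
  have hMz : M *ᵥ z = y := by
    rw [hz, mulVec_mulVec, Matrix.mul_nonsing_inv _ hu, one_mulVec]
  have h0 := hM.posSemidef.dotProduct_mulVec_nonneg (z - C⁻¹ • y)
  have h1 := h y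
  have h2 := dot_symm hM.1 z y
  rw [hMz] at h2
  simp only [star_trivial, mulVec_sub, mulVec_smul, hMz, sub_dotProduct, dotProduct_sub,
    smul_dotProduct, dotProduct_smul, smul_eq_mul, ← h2] at h0
  rw [dotProduct_comm z y] at h0
  have h3 : C⁻¹ * (C⁻¹ * (y ⬝ᵥ M *ᵥ y)) ≤ C⁻¹ * (C⁻¹ * (C * (y ⬝ᵥ y))) := by gcongr
  have h4 : C⁻¹ * (C⁻¹ * (C * (y ⬝ᵥ y))) = C⁻¹ * (y ⬝ᵥ y) := by field_simp
  rw [div_eq_inv_mul]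
  rw [h2] at h0
  linarith

lemma gram_swap {m n : Type*} [Fintype n] [Fintype m] [DecidableEq m] [DecidableEq n]
    (U : Matrix n m ℝ) (L : ℝ) (h : (L • (1 : Matrix m m ℝ) - Uᵀ * U).PosSemidef) (hL : 0 ≤ L) :
    (L • (1 : Matrix n n ℝ) - U * Uᵀ).PosSemidef := by
  refine .of_dotProduct_mulVec_nonneg ?_ fun y => ?_
  · simp [IsHermitian]
  set z := Uᵀ *ᵥ y with hz
  have h1 := h.dotProduct_mulVec_nonneg z
  have e1 : y ⬝ᵥ ((U * Uᵀ) *ᵥ y) = z ⬝ᵥ z := by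
    rw [← mulVec_mulVec, dotProduct_mulVec, ← mulVec_transpose]
  have e2 : z ⬝ᵥ ((Uᵀ * U) *ᵥ z) = (U *ᵥ z) ⬝ᵥ (U *ᵥ z) := by
    rw [← mulVec_mulVec, dotProduct_mulVec, ← mulVec_transpose, transpose_transpose]
  have e3 : z ⬝ᵥ z = y ⬝ᵥ (U *ᵥ z) := by
    rw [dotProduct_mulVec y, ← mulVec_transpose]
  have cs : (y ⬝ᵥ (U *ᵥ z)) ^ 2 ≤ (y ⬝ᵥ y) * ((U *ᵥ z) ⬝ᵥ (U *ᵥ z)) := by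
    have := Finset.sum_mul_sq_le_sq_mul_sq Finset.univ y (U *ᵥ z)
    simpa [dotProduct, sq] using this
  simp only [star_trivial, sub_mulVec, dotProduct_sub, smul_mulVec, one_mulVec, dotProduct_smul,
    smul_eq_mul, e2] at h1
  simp only [star_trivial, sub_mulVec, dotProduct_sub, smul_mulVec, one_mulVec, dotProduct_smul,
    smul_eq_mul, e1]
  rw [← e3] at cs
  have hy : 0 ≤ y ⬝ᵥ y := by simpa using dotProduct_star_self_nonneg y
  have hzz : 0 ≤ z ⬝ᵥ z := by simpa using dotProduct_star_self_nonneg z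
  rcases hzz.eq_or_lt with h0 | h0
  · rw [← h0]; nlinarith
  · nlinarith [mul_le_mul_of_nonneg_left (sub_nonneg.1 h1) hy]

/-- The matrix with rows `λ̄ᵢᵀ`. -/
noncomputable def Umat {N : ℕ} (lam : Fin N → Fin 2 → ℝ) : Matrix (Fin N) (Fin 2) ℝ :=
  fun i m => bearingBar (lam i) m

lemma bar_zero (l : Fin 2 → ℝ) : bearingBar l 0 = Real.sqrt 2 * l 1 := by
  simp [bearingBar, Rmat, mulVec, dotProduct, Fin.sum_univ_two]

lemma bar_one (l : Fin 2 → ℝ) : bearingBar l 1 = -Real.sqrt 2 * l 0 := by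
  simp [bearingBar, Rmat, mulVec, dotProduct, Fin.sum_univ_two]

lemma sqrt_two_sq : Real.sqrt 2 ^ 2 = 2 := Real.sq_sqrt (by norm_num)

lemma cumBearing_eq {N : ℕ} (lam : Fin N → Fin 2 → ℝ)
    (hlam : ∀ i, lam i 0 ^ 2 + lam i 1 ^ 2 = 1) :
    cumBearing lam = (Umat lam)ᵀ * Umat lam := by
  have h2 := sqrt_two_sq
  ext a b
  simp only [cumBearing, Matrix.sum_apply, Matrix.mul_apply, transpose_apply, Umat]
  refine Finset.sum_congr rfl fun i _ => ?_
  have := hlam i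
  fin_cases a <;> fin_cases b <;> simp [vecMulVec_apply, bar_zero, bar_one]
  · linear_combination (-lam i 1 ^ 2) * h2 - 2 * this
  · linear_combination ((-1) * (lam i 0 * lam i 1)) * h2
  · linear_combination ((-1) * (lam i 0 * lam i 1)) * h2
  · linear_combination (-lam i 0 ^ 2) * h2 - 2 * this

lemma trace_cumBearing {N : ℕ} (lam : Fin N → Fin 2 → ℝ)
    (hlam : ∀ i, lam i 0 ^ 2 + lam i 1 ^ 2 = 1) :
    (cumBearing lam).trace = 2 * N := by
  have : ∀ i, ((2 : ℝ) • (1 : Matrix (Fin 2) (Fin 2) ℝ)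
    - (2 : ℝ) • vecMulVec (lam i) (lam i)).trace = 2 := by
    intro i
    simp [Matrix.trace, Fin.sum_univ_two, vecMulVec_apply]
    linear_combination (-2) * hlam i
  rw [cumBearing, Matrix.trace_sum]
  simp [this, -trace_sub, mul_comm]

lemma kern_sq {N : ℕ} {k : Matrix (Option (Fin N)) (Option (Fin N)) ℝ} (hk : k.PosSemidef)
    (i : Fin N) : k (some i) none ^ 2 ≤ k none none * k (some i) (some i) := by
  have h := (hk.submatrix (![none, some i] : Fin 2 → Option (Fin N))).det_nonneg
  have hs := hk.1.apply (some i) none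
  rw [det_fin_two] at h
  simp at h hs
  rw [hs] at h
  nlinarith

lemma B_apply {N : ℕ} (lam : Fin N → Fin 2 → ℝ)
    (k : Matrix (Option (Fin N)) (Option (Fin N)) ℝ) (i : Fin N) (m : Fin 2) :
    (Gmat lam * KstarMat k) i m = k (some i) none * Umat lam i m := by
  simp [Matrix.mul_apply, Gmat, KstarMat, Umat, Fintype.sum_prod_type, Matrix.one_apply, mul_comm]

lemma M_eq {N : ℕ} (lam : Fin N → Fin 2 → ℝ) (hlam : ∀ i, lam i 0 ^ 2 + lam i 1 ^ 2 = 1)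
    (k : Matrix (Option (Fin N)) (Option (Fin N)) ℝ) (σ : ℝ) :
    Gmat lam * (Kmat k + σ ^ 2 • (1 : Matrix (Fin N × Fin 2) (Fin N × Fin 2) ℝ)) * (Gmat lam)ᵀ
      = (k.submatrix (some : Fin N → Option (Fin N)) some).hadamard (Umat lam * (Umat lam)ᵀ)
        + (2 * σ ^ 2) • (1 : Matrix (Fin N) (Fin N) ℝ) := by
  have h2 := sqrt_two_sq
  have hK : Gmat lam * Kmat k * (Gmat lam)ᵀ
      = (k.submatrix (some : Fin N → Option (Fin N)) some).hadamard (Umat lam * (Umat lam)ᵀ) := by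
    ext i j
    simp [Matrix.mul_apply, Gmat, Kmat, Umat, Fintype.sum_prod_type, Matrix.one_apply,
      hadamard_apply]
    ring
  have hG : Gmat lam * (Gmat lam)ᵀ = (2 : ℝ) • (1 : Matrix (Fin N) (Fin N) ℝ) := by
    ext i j
    by_cases hij : i = j
    · subst hij
      simp [Matrix.mul_apply, Gmat, Fintype.sum_prod_type, Fin.sum_univ_two, bar_zero, bar_one]
      linear_combination (lam i 1 ^ 2 + lam i 0 ^ 2) * h2 + 2 * hlam i
    · simp [Matrix.mul_apply, Gmat, Fintype.sum_prod_type, hij]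
  rw [Matrix.mul_add, Matrix.add_mul, hK, Matrix.mul_smul, Matrix.mul_one, Matrix.smul_mul, hG,
    smul_smul, mul_comm (σ ^ 2)]

lemma scalar_bound (c kb m L l s N : ℝ) (hc : 0 < c) (hkb : 0 < kb) (hm : 0 ≤ m)
    (hmk : m ≤ c * kb) (hl : 0 < l) (hlL : l ≤ L) (hLN : N ≤ L) (hN : 0 < N) (hs : 0 ≤ s) :
    c - m * l / (kb * L + 2 * s) ≤ 2 * c * s / (N * kb) + (c * kb - m / (L / l)) / kb := by
  have hL : 0 < L := hl.trans_le hlL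
  have e1 : (c * kb - m / (L / l)) / kb = c - m * l / (kb * L) := by field_simp
  have e2 : m * l / (kb * L) - m * l / (kb * L + 2 * s)
      = 2 * s * (m * l) / ((kb * L) * (kb * L + 2 * s)) := by
    field_simp; ring
  have h1 : 2 * s * (m * l) / ((kb * L) * (kb * L + 2 * s))
      ≤ 2 * s * (c * kb * L) / ((kb * L) * (kb * N)) := by
    gcongr
    nlinarith
  have e3 : 2 * s * (c * kb * L) / ((kb * L) * (kb * N)) = 2 * c * s / (N * kb) := by
    field_simp
  rw [e1]; linarith

theorem posterior_covariance_norm_bound {N : ℕ} (hN : 1 ≤ N)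
    (lam : Fin N → Fin 2 → ℝ) (hlam : ∀ i, lam i 0 ^ 2 + lam i 1 ^ 2 = 1)
    (hPd : (cumBearing lam).PosDef)
    (k : Matrix (Option (Fin N)) (Option (Fin N)) ℝ)
    (hk : k.PosSemidef) (hkd : ∀ i : Fin N, 0 < k (some i) (some i))
    (hkstar : 0 < k none none) (σ : ℝ) (hσ : 0 < σ) :
    specNorm
        (k none none • (1 : Matrix (Fin 2) (Fin 2) ℝ)
          - (KstarMat k)ᵀ * (Gmat lam)ᵀ
            * (Gmat lam * (Kmat k + σ ^ 2 • (1 : Matrix (Fin N × Fin 2) (Fin N × Fin 2) ℝ))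
                * (Gmat lam)ᵀ)⁻¹
            * Gmat lam * KstarMat k) ≤
      2 * k none none * σ ^ 2 /
          (N * Finset.univ.sup'
            (Finset.univ_nonempty_iff.mpr (Fin.pos_iff_nonempty.mp hN))
            (fun i : Fin N => k (some i) (some i)))
        + (k none none * Finset.univ.sup'
              (Finset.univ_nonempty_iff.mpr (Fin.pos_iff_nonempty.mp hN))
              (fun i : Fin N => k (some i) (some i))
            - (Finset.univ.inf'
                (Finset.univ_nonempty_iff.mpr (Fin.pos_iff_nonempty.mp hN))
                (fun i : Fin N => k (some i) none ^ 2)) / condNum hPd.1) /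
          Finset.univ.sup'
            (Finset.univ_nonempty_iff.mpr (Fin.pos_iff_nonempty.mp hN))
            (fun i : Fin N => k (some i) (some i)) := by
  have hne : (Finset.univ : Finset (Fin N)).Nonempty :=
    Finset.univ_nonempty_iff.mpr (Fin.pos_iff_nonempty.mp hN)
  have : Nonempty (Fin N) := Fin.pos_iff_nonempty.mp hN
  set kb := Finset.univ.sup' (Finset.univ_nonempty_iff.mpr (Fin.pos_iff_nonempty.mp hN))
    (fun i : Fin N => k (some i) (some i)) with hkb
  set mk := Finset.univ.inf' (Finset.univ_nonempty_iff.mpr (Fin.pos_iff_nonempty.mp hN))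
    (fun i : Fin N => k (some i) none ^ 2) with hmk
  set U := Umat lam with hU
  have hkb_le : ∀ i : Fin N, k (some i) (some i) ≤ kb := fun i =>
    Finset.le_sup' (fun i : Fin N => k (some i) (some i)) (Finset.mem_univ i)
  have hmk_le : ∀ i : Fin N, mk ≤ k (some i) none ^ 2 := fun i =>
    Finset.inf'_le (fun i : Fin N => k (some i) none ^ 2) (Finset.mem_univ i)
  have i0 : Fin N := Classical.arbitrary _
  have hkb0 : 0 < kb := (hkd i0).trans_le (hkb_le i0)
  have hmk0 : 0 ≤ mk := Finset.le_inf' _ _ fun i _ => sq_nonneg _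
  have hksq : ∀ i : Fin N, k (some i) none ^ 2 ≤ k none none * k (some i) (some i) :=
    fun i => kern_sq hk i
  have hmkk : mk ≤ k none none * kb :=
    (hmk_le i0).trans ((hksq i0).trans (mul_le_mul_of_nonneg_left (hkb_le i0) hkstar.le))
  -- eigenvalue data
  have hP : cumBearing lam = Uᵀ * U := cumBearing_eq lam hlam
  set L := ⨆ i, hPd.1.eigenvalues i with hLdef
  set l := ⨅ i, hPd.1.eigenvalues i with hldef
  have hL : ∀ i, hPd.1.eigenvalues i ≤ L := fun i => le_ciSup (Set.finite_range _).bddAbove i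
  have hl : ∀ i, l ≤ hPd.1.eigenvalues i := fun i => ciInf_le (Set.finite_range _).bddBelow i
  have hl0 : 0 < l := by
    obtain ⟨i, hi⟩ := exists_eq_ciInf_of_finite (f := hPd.1.eigenvalues)
    rw [hldef, ← hi]; exact hPd.eigenvalues_pos i
  have hlL : l ≤ L := (hl 0).trans (hL 0)
  have hLN : (N : ℝ) ≤ L := by
    have h1 := hPd.1.trace_eq_sum_eigenvalues
    rw [trace_cumBearing lam hlam, Fin.sum_univ_two] at h1
    have h2 := hL 0
    have h3 := hL 1
    simp only [RCLike.ofReal_real_eq_id, id] at h1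
    linarith
  have hNpos : (0 : ℝ) < N := by exact_mod_cast hN
  have hL0 : 0 < L := hl0.trans_le hlL
  have hcond : condNum hPd.1 = L / l := rfl
  rw [hcond]
  have hPL := quad_sub_posSemidef hPd.1 L hL
  have hPl := sub_quad_posSemidef hPd.1 l hl
  rw [hP] at hPL hPl
  have hQ := gram_swap U L hPL hL0.le
  set ks := k.submatrix (some : Fin N → Option (Fin N)) some with hks
  have hksP : ks.PosSemidef := hk.submatrix _
  set M := ks.hadamard (U * Uᵀ) + (2 * σ ^ 2) • (1 : Matrix (Fin N) (Fin N) ℝ) with hM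
  have hMeq : Gmat lam * (Kmat k + σ ^ 2 • (1 : Matrix (Fin N × Fin 2) (Fin N × Fin 2) ℝ))
                * (Gmat lam)ᵀ = M := M_eq lam hlam k σ
  have hMpd : M.PosDef := by
    refine PosDef.posSemidef_add (hksP.hadamard ?_) ?_
    · have := posSemidef_self_mul_conjTranspose U
      rwa [conjTranspose_eq_transpose_of_trivial] at this
    · exact PosDef.one.smul (by positivity)
  set B := Gmat lam * KstarMat k with hB
  have hBe : ∀ i m, B i m = k (some i) none * U i m := B_apply lam k
  have hSeq : k none none • (1 : Matrix (Fin 2) (Fin 2) ℝ)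
          - (KstarMat k)ᵀ * (Gmat lam)ᵀ
            * (Gmat lam * (Kmat k + σ ^ 2 • (1 : Matrix (Fin N × Fin 2) (Fin N × Fin 2) ℝ))
                * (Gmat lam)ᵀ)⁻¹
            * Gmat lam * KstarMat k = k none none • (1 : Matrix (Fin 2) (Fin 2) ℝ) - Bᵀ * M⁻¹ * B := by
    rw [hMeq, hB, transpose_mul, Matrix.mul_assoc _ (Gmat lam) (KstarMat k)]
  rw [hSeq]
  have hMbd : ∀ v : Fin N → ℝ, v ⬝ᵥ (M *ᵥ v) ≤ (kb * L + 2 * σ ^ 2) * (v ⬝ᵥ v) := by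
    intro v
    have h1 := (hksP.hadamard hQ).dotProduct_mulVec_nonneg v
    have e : ks.hadamard (L • (1 : Matrix (Fin N) (Fin N) ℝ) - U * Uᵀ)
        = L • diagonal (fun i => ks i i) - ks.hadamard (U * Uᵀ) := by
      ext i j
      by_cases hij : i = j
      · subst hij; simp [hadamard_apply]; ring
      · simp [hadamard_apply, hij]
    have h2 : v ⬝ᵥ (diagonal (fun i => ks i i) *ᵥ v) ≤ kb * (v ⬝ᵥ v) := by
      simp only [dotProduct, mulVec_diagonal, Finset.mul_sum]
      refine Finset.sum_le_sum fun i _ => ?_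
      have : ks i i ≤ kb := hkb_le i
      nlinarith [mul_le_mul_of_nonneg_right this (mul_self_nonneg (v i))]
    rw [e] at h1
    simp only [star_trivial, sub_mulVec, dotProduct_sub, smul_mulVec, dotProduct_smul,
      smul_eq_mul] at h1
    simp only [hM, add_mulVec, dotProduct_add, smul_mulVec, one_mulVec, dotProduct_smul,
      smul_eq_mul]
    nlinarith [mul_le_mul_of_nonneg_left h2 hL0.le]
  have hSpsd : (k none none • (1 : Matrix (Fin 2) (Fin 2) ℝ) - Bᵀ * M⁻¹ * B).PosSemidef := by
    have : Invertible M := hMpd.isUnit.invertible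
    rw [← conjTranspose_eq_transpose_of_trivial B, ← PosDef.fromBlocks₁₁ B _ hMpd]
    let V : Matrix (Fin N ⊕ Fin 2) (Fin 2) ℝ := fromRows U 1
    let e : Fin N ⊕ Fin 2 → Option (Fin N) := Sum.elim some (fun _ => none)
    have h1 := (hk.submatrix e).hadamard (posSemidef_self_mul_conjTranspose V)
    have h2 : (diagonal (Sum.elim (fun _ : Fin N => 2 * σ ^ 2) (fun _ : Fin 2 => (0:ℝ)))).PosSemidef :=
      PosSemidef.diagonal (by rintro (i | i) <;> simp; positivity)
    have hkh : ∀ i, k none (some i) = k (some i) none := fun i => by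
      have := hk.1.apply (some i) none
      simpa using this
    convert! h1.add h2 using 1
    ext (i | i) (j | j)
    · by_cases hij : i = j
      · subst hij; simp [hM, hks, V, e, hadamard_apply, Matrix.mul_apply]
      · simp [hM, hks, V, e, hadamard_apply, Matrix.mul_apply, hij]
    · simp [V, e, hadamard_apply, Matrix.mul_apply, hBe, Matrix.one_apply]
    · simp [V, e, hadamard_apply, Matrix.mul_apply, hBe, Matrix.one_apply, hkh]
    · by_cases hij : i = j
      · subst hij; simp [V, e, hadamard_apply, Matrix.mul_apply, Matrix.one_apply]
      · simp [V, e, hadamard_apply, Matrix.mul_apply, Matrix.one_apply, hij]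
        exact fun h => absurd h.symm hij
  have hC : 0 < kb * L + 2 * σ ^ 2 := by positivity
  refine specNorm_le_of_quad hSpsd _ fun v => ?_
  have hv : 0 ≤ v ⬝ᵥ v := by simpa using dotProduct_star_self_nonneg v
  have h1 := inv_quad_lower hMpd _ hC hMbd (B *ᵥ v)
  have h2 : mk * l * (v ⬝ᵥ v) ≤ (B *ᵥ v) ⬝ᵥ (B *ᵥ v) := by
    have h3 := hPl.dotProduct_mulVec_nonneg v
    have e2 : v ⬝ᵥ ((Uᵀ * U) *ᵥ v) = (U *ᵥ v) ⬝ᵥ (U *ᵥ v) := by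
      rw [← mulVec_mulVec, dotProduct_mulVec, ← mulVec_transpose, transpose_transpose]
    simp only [star_trivial, sub_mulVec, dotProduct_sub, smul_mulVec, dotProduct_smul,
      smul_eq_mul, one_mulVec, e2] at h3
    have hBv : ∀ i, (B *ᵥ v) i = k (some i) none * (U *ᵥ v) i := by
      intro i
      simp only [mulVec, dotProduct, hBe, Finset.mul_sum, mul_assoc]
    have h4 : mk * ((U *ᵥ v) ⬝ᵥ (U *ᵥ v)) ≤ (B *ᵥ v) ⬝ᵥ (B *ᵥ v) := by
      simp only [dotProduct, hBv, Finset.mul_sum]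
      refine Finset.sum_le_sum fun i _ => ?_
      nlinarith [mul_le_mul_of_nonneg_right (hmk_le i) (mul_self_nonneg ((U *ᵥ v) i))]
    nlinarith [mul_le_mul_of_nonneg_left (sub_nonneg.1 h3) hmk0]
  have e5 : v ⬝ᵥ ((k none none • (1 : Matrix (Fin 2) (Fin 2) ℝ) - Bᵀ * M⁻¹ * B) *ᵥ v)
      = k none none * (v ⬝ᵥ v) - (B *ᵥ v) ⬝ᵥ (M⁻¹ *ᵥ (B *ᵥ v)) := by
    simp only [sub_mulVec, dotProduct_sub, smul_mulVec, dotProduct_smul,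
      smul_eq_mul, one_mulVec, ← mulVec_mulVec]
    rw [dotProduct_mulVec v Bᵀ, ← mulVec_transpose, transpose_transpose]
  rw [e5]
  have h6 : mk * l * (v ⬝ᵥ v) / (kb * L + 2 * σ ^ 2) ≤ (B *ᵥ v) ⬝ᵥ (M⁻¹ *ᵥ (B *ᵥ v)) :=
    (div_le_div_of_nonneg_right h2 hC.le).trans h1
  have h7 := scalar_bound (k none none) kb mk L l (σ ^ 2) N hkstar hkb0 hmk0 hmkk hl0 hlL hLN hNpos
    (sq_nonneg σ)
  have h8 := mul_le_mul_of_nonneg_right h7 hv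
  have h9 : (k none none - mk * l / (kb * L + 2 * σ ^ 2)) * (v ⬝ᵥ v)
    = k none none * (v ⬝ᵥ v) - mk * l * (v ⬝ᵥ v) / (kb * L + 2 * σ ^ 2) := by ring
  linarith
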